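/- Let K be an algebraically closed field equipped with a surjective valuation v: K^* → ℚ. Let (ι, Γ, m) be a zero tension curve in ℚ^n of genus zero (so Γ is a finite tree) and degree δ. Then there exist a finite subset S ⊂ ℙ¹(K) and nonzero rational functions φ_1, …, φ_n ∈ K(u), all of whose zeros and poles lie in S, such that: (a) for every s ∈ S the vector σ_s = (ord_s φ_1, …, ord_s φ_n) ∈ ℤ^n of orders of vanishing is nonzero; (b) writing each σ_s = d_s ρ_s with d_s a positive integer and ρ_s a primitive vector of ℤ^n, and for each occurring primitive direction ρ setting d_ρ = Σ_{s: ρ_s = ρ} d_s, the multiset {d_ρ · ρ} equals δ; and (c) the set {(v(φ_1(x)), …, v(φ_n(x))) : x ∈ ℙ¹(K) ∖ S} equals the image ι(Γ ∖ ∂Γ) ⊆ ℚ^n. -/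

import Mathlib

/-!
The functions are `φᵢ = Cᵢ ∏ₑ (u - aₑ) ^ (m(e) rdir(e)ᵢ)`, with one point `aₑ ∈ K` for each ray
`e`. By the zero tension condition the exponents sum to zero, so `∞` is neither a zero nor a
pole, and the order vector at `aₑ` is `m(e) rdir(e)`. It remains to choose the points `aₑ` so
that the tropical map `x ↦ v(C) + ∑ₑ m(e) v(x - aₑ) rdir(e)` has the prescribed image.

The points are found by exploring the tree from one vertex, adding one edge and its new
endpoint at a time. A partial curve has as rays all half-edges leaving it, and the invariant
`TropLift.Realizes` gives each ray `h` a centre `a h` and a radius `ρ h`, such that the disc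
`v (x - a h) > ρ h` is mapped onto the open ray and its complement onto the part explored.
For a single vertex the centres are taken in distinct residue classes
(`TropLift.realizes_star`). To add a vertex at the end of the half-edge `g`, the centre `a g` is
replaced by a cluster of centres `a g + t θₕ` with `v t = ρ g + ℓ`, where `ℓ` is the length of
the edge divided by its multiplicity and the `θₕ` lie in distinct residue classes
(`TropLift.realizes_grow`). The weights of the new half-edges sum to that of `g`, so the
tropical map is unchanged outside the disc `v (x - a g) ≥ ρ g + ℓ`, and inside it looks like the
star of the new vertex. Enough residue classes exist because `K` is algebraically closed
(`TropLift.exists_new_residue`).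

Contracted edges get an arbitrary positive length: their weight is zero, so the tropical map
is constant along them.
-/

open scoped Classical

/-- A vector of `ℤ^n` is primitive: nonzero, and its coordinates have no common factor. -/
def IsPrimitiveVec {n : ℕ} (ρ : Fin n → ℤ) : Prop :=
  ρ ≠ 0 ∧ ∀ d : ℤ, (∀ i, d ∣ ρ i) → IsUnit d

/-- A combinatorial model of a *zero tension curve* `(ι, Γ, m)` in `ℚ^n`.
The interior vertices (the vertices of `Γ ∖ ∂Γ`) are `Fin V`, placed in `ℚ^n` by `pos`.
Bounded edges (both endpoints interior) are `Fin EB`; the edge `e` joins `bsrc e` to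
`bdst e`, has primitive direction `bdir e` (or `0` if it is contracted to a point),
length `blen e` and multiplicity `mB e`.  Unbounded edges — the edges with one endpoint a
degree-one boundary vertex of `Γ`, mapped to rays — are `Fin ER`; the ray `e` is attached
to the interior vertex `rsrc e`, points in the primitive direction `rdir e` and has
multiplicity `mR e`. -/
structure ZTC (n : ℕ) where
  V : ℕ
  EB : ℕ
  ER : ℕ
  pos : Fin V → Fin n → ℚ
  bsrc : Fin EB → Fin V
  bdst : Fin EB → Fin V
  bdir : Fin EB → Fin n → ℤ
  blen : Fin EB → ℚ
  mB : Fin EB → ℕ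
  rsrc : Fin ER → Fin V
  rdir : Fin ER → Fin n → ℤ
  mR : Fin ER → ℕ

namespace ZTC

variable {n : ℕ} (C : ZTC n)

/-- Validity of the data: multiplicities are positive, directions are primitive (with
`bdir e = 0` exactly for contracted edges), bounded edges join their endpoints
(`pos (bdst e) - pos (bsrc e) = blen e • bdir e`), and the zero tension condition
`Σ_{e ∋ u} m(e)·ρ_u(e) = 0` holds at every interior vertex `u`. -/
def Valid : Prop :=
  (∀ e, 0 < C.mB e) ∧ (∀ e, 0 < C.mR e) ∧
  (∀ e, IsPrimitiveVec (C.rdir e)) ∧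
  (∀ e, (0 < C.blen e ∧ IsPrimitiveVec (C.bdir e)) ∨ (C.blen e = 0 ∧ C.bdir e = 0)) ∧
  (∀ e, (fun i => C.pos (C.bdst e) i - C.pos (C.bsrc e) i)
      = fun i => C.blen e * (C.bdir e i : ℚ)) ∧
  (∀ u : Fin C.V,
    (∑ e : Fin C.EB, (C.mB e : ℤ) •
        ((if C.bsrc e = u then C.bdir e else 0) + (if C.bdst e = u then -C.bdir e else 0)))
      + (∑ e : Fin C.ER, if C.rsrc e = u then (C.mR e : ℤ) • C.rdir e else 0) = 0)

/-- Two interior vertices are adjacent if some bounded edge joins them. -/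
def Adj (u w : Fin C.V) : Prop :=
  ∃ e, (C.bsrc e = u ∧ C.bdst e = w) ∨ (C.bsrc e = w ∧ C.bdst e = u)

/-- The graph `Γ` is connected. -/
def Connected : Prop :=
  ∀ u w : Fin C.V, Relation.ReflTransGen C.Adj u w

/-- The image `ι(Γ ∖ ∂Γ) ⊆ ℚ^n`: the vertex positions together with the points of the
bounded edges and of the unbounded rays. -/
def ImageSet : Set (Fin n → ℚ) :=
  {x | (∃ u, x = C.pos u) ∨
    (∃ e, ∃ s : ℚ, 0 ≤ s ∧ s ≤ C.blen e ∧
      x = fun i => C.pos (C.bsrc e) i + s * (C.bdir e i : ℚ)) ∨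
    (∃ e, ∃ s : ℚ, 0 ≤ s ∧
      x = fun i => C.pos (C.rsrc e) i + s * (C.rdir e i : ℚ))}

/-- `Γ` is a tree: it is connected and has first Betti number zero. -/
def IsTree : Prop := C.Connected ∧ C.V = C.EB + 1

end ZTC

/-- The order of vanishing of a nonzero rational function `φ ∈ K(u)` at a point of
`ℙ¹(K) = K ∪ {∞}` (we encode `ℙ¹(K)` as `Option K`, with `none = ∞`). -/
noncomputable def ordAt {K : Type*} [Field K] (s : Option K) (φ : RatFunc K) : ℤ :=
  match s with
  | some a => (φ.num.rootMultiplicity a : ℤ) - (φ.denom.rootMultiplicity a : ℤ)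
  | none => - φ.intDegree

/-- Evaluation of a rational function at a point of `ℙ¹(K)`; at `∞` the value is the
ratio of the leading coefficients (the correct value when `∞` is neither a zero nor a
pole). -/
noncomputable def evalAt {K : Type*} [Field K] (s : Option K) (φ : RatFunc K) : K :=
  match s with
  | some a => φ.eval (RingHom.id K) a
  | none => φ.num.leadingCoeff / φ.denom.leadingCoeff

namespace TropLift

/-! ### Residue classes and tropical maps of the line -/

section Valuation

variable {K : Type*} [Field K] (V : AddValuation K (WithTop ℚ))

lemma val_sub_ge {r : WithTop ℚ} {x y z : K} (h1 : r ≤ V (x - y)) (h2 : r ≤ V (y - z)) :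
    r ≤ V (x - z) := by
  have := V.map_add (x - y) (y - z)
  rw [sub_add_sub_cancel] at this
  exact (le_min h1 h2).trans this

/-- In an ultrametric triangle, a side strictly closer than a second one leaves the third
equal to the second. -/
lemma val_sub_eq {x y z : K} (h : V (y - z) < V (x - y)) : V (x - z) = V (y - z) := by
  have := V.map_add_eq_of_lt_right h
  rwa [sub_add_sub_cancel] at this

/-- The residue field is infinite: given finitely many integral elements, a root of
`X ∏ (X - t) + 1` is integral and differs from each of them by a unit. -/
lemma exists_new_residue [IsAlgClosed K] (T : Finset K) (hT : ∀ t ∈ T, 0 ≤ V t) :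
    ∃ z, 0 ≤ V z ∧ ∀ t ∈ T, V (z - t) = 0 := by
  classical
  set T' := insert 0 T with hT'
  have hT0 : ∀ t ∈ T', 0 ≤ V t := by
    intro t ht
    rcases Finset.mem_insert.1 ht with rfl | ht
    · simp
    · exact hT t ht
  obtain ⟨z, hz⟩ := IsAlgClosed.exists_root
    ((∏ t ∈ T', (Polynomial.X - Polynomial.C t)) + Polynomial.C 1) (by
      refine Polynomial.degree_ne_of_natDegree_ne ?_
      rw [Polynomial.natDegree_add_C, Polynomial.natDegree_finsetProd_X_sub_C_eq_card]
      exact Finset.card_ne_zero_of_mem (Finset.mem_insert_self 0 T))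
  have hprod : ∏ t ∈ T', (z - t) = -1 := by
    have := hz
    simp only [Polynomial.IsRoot, Polynomial.eval_add, Polynomial.eval_prod,
      Polynomial.eval_sub, Polynomial.eval_X, Polynomial.eval_C] at this
    exact eq_neg_of_add_eq_zero_left this
  have hVprod : ∀ s : Finset K, V (∏ t ∈ s, (z - t)) = ∑ t ∈ s, V (z - t) := by
    intro s
    induction s using Finset.induction_on with
    | empty => simp
    | insert a s ha ih => rw [Finset.prod_insert ha, Finset.sum_insert ha, V.map_mul, ih]
  have hsum : ∑ t ∈ T', V (z - t) = 0 := by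
    rw [← hVprod, hprod, V.map_neg, V.map_one]
  have hz0 : 0 ≤ V z := by
    by_contra! hneg
    have h1 : ∀ t ∈ T', V (z - t) < 0 := by
      intro t ht
      rw [sub_eq_add_neg, V.map_add_eq_of_lt_left]
      · exact hneg
      · rw [V.map_neg]; exact hneg.trans_le (hT0 t ht)
    have h2 : ∑ t ∈ T', V (z - t) ≤ V (z - 0) := by
      rw [← Finset.add_sum_erase T' (fun t => V (z - t)) (Finset.mem_insert_self 0 T)]
      have : ∑ t ∈ T'.erase 0, V (z - t) ≤ 0 :=
        Finset.sum_nonpos fun t ht => (h1 t (Finset.mem_of_mem_erase ht)).le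
      calc V (z - 0) + ∑ t ∈ T'.erase 0, V (z - t) ≤ V (z - 0) + 0 := by gcongr
        _ = V (z - 0) := add_zero _
    rw [hsum] at h2
    exact absurd (h1 0 (Finset.mem_insert_self 0 T)) (not_lt.2 h2)
  refine ⟨z, hz0, fun t ht => ?_⟩
  have h1 : ∀ t ∈ T', 0 ≤ V (z - t) := fun t ht =>
    (le_min hz0 (hT0 t ht)).trans (V.map_sub z t)
  exact (Finset.sum_eq_zero_iff_of_nonneg h1).1 hsum t (Finset.mem_insert_of_mem ht)

/-- Representatives of pairwise distinct residue classes indexed by a finite set, and one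
further integral element avoiding all of these classes. -/
lemma exists_residues [IsAlgClosed K] {H : Type*} (N : Finset H) :
    ∃ (θ : H → K) (z : K), (∀ h ∈ N, 0 ≤ V (θ h)) ∧
      (∀ h ∈ N, ∀ k ∈ N, h ≠ k → V (θ h - θ k) = 0) ∧
      0 ≤ V z ∧ (∀ h ∈ N, V (z - θ h) = 0) := by
  classical
  induction N using Finset.induction_on with
  | empty => exact ⟨fun _ => 0, 0, by simp⟩
  | insert g N hg ih =>
    obtain ⟨θ, z, h1, h2, h3, h4⟩ := ih
    obtain ⟨y, hy, hy'⟩ := exists_new_residue V (insert z (N.image θ)) (by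
      intro t ht
      rcases Finset.mem_insert.1 ht with rfl | ht
      · exact h3
      · obtain ⟨h, hh, rfl⟩ := Finset.mem_image.1 ht
        exact h1 h hh)
    have hne : ∀ h ∈ N, h ≠ g := fun h hh e => hg (e ▸ hh)
    have hyz : V (y - z) = 0 := hy' z (by simp)
    have hyθ : ∀ h ∈ N, V (y - θ h) = 0 := fun h hh =>
      hy' _ (Finset.mem_insert_of_mem (Finset.mem_image_of_mem θ hh))
    refine ⟨Function.update θ g z, y, ?_, ?_, hy, ?_⟩
    · intro h hh
      rcases Finset.mem_insert.1 hh with rfl | hh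
      · simpa using h3
      · rw [Function.update_of_ne (hne h hh)]; exact h1 h hh
    · intro h hh k hk hhk
      rcases Finset.mem_insert.1 hh with rfl | hh' <;>
        rcases Finset.mem_insert.1 hk with rfl | hk'
      · exact absurd rfl hhk
      · rw [Function.update_self, Function.update_of_ne (hne k hk')]; exact h4 k hk'
      · rw [Function.update_self, Function.update_of_ne (hne h hh'), V.map_sub_swap]
        exact h4 h hh'
      · rw [Function.update_of_ne (hne h hh'), Function.update_of_ne (hne k hk')]
        exact h2 h hh' k hk' hhk
    · intro h hh
      rcases Finset.mem_insert.1 hh with rfl | hh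
      · simpa using hyz
      · rw [Function.update_of_ne (hne h hh)]; exact hyθ h hh

/-- The valuation as a rational number; the value `0` at `x = 0` is never used. -/
noncomputable def w (x : K) : ℚ := (V x).untopD 0

lemma w_eq {x : K} {r : ℚ} (h : V x = r) : w V x = r := by simp [w, h]

lemma coe_w {x : K} (hx : x ≠ 0) : ((w V x : ℚ) : WithTop ℚ) = V x := by
  have : V x ≠ ⊤ := fun h => hx (V.top_iff.1 h)
  lift V x to ℚ using this with q hq
  simp [w, ← hq]

variable {H : Type*} {n : ℕ}

/-- The tropical map `x ↦ c + ∑ₕ v (x - aₕ) σₕ` attached to points `aₕ` with weights `σₕ`;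
it is the coordinatewise valuation of the functions `Cᵢ ∏ₕ (x - aₕ) ^ σₕᵢ`, `v Cᵢ = cᵢ`. -/
noncomputable def tropMap (A : Finset H) (σ : H → Fin n → ℤ) (a : H → K) (c : Fin n → ℚ)
    (x : K) : Fin n → ℚ :=
  fun i => c i + ∑ h ∈ A, (σ h i : ℚ) * w V (x - a h)

/-- The data `(A, σ, base, Sk)` is the image of a tropical map on the projective line.
Each `h ∈ A` has a centre `aₕ` and a radius `ρₕ`, such that the other centres lie outside
the open disc `v (x - aₕ) > ρₕ`; this disc is mapped to the open ray from `base h` in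
direction `σₕ`, with parameter `v (x - aₕ) - ρₕ`, and the points outside all these discs
are mapped onto the skeleton `Sk`.  The weights sum to zero, so `c` is the value at `∞`. -/
def Realizes (A : Finset H) (σ : H → Fin n → ℤ) (base : H → Fin n → ℚ)
    (Sk : Set (Fin n → ℚ)) : Prop :=
  ∃ (a : H → K) (ρ : H → ℚ) (c : Fin n → ℚ),
    (∑ h ∈ A, σ h = 0) ∧
    (∀ h ∈ A, ∀ k ∈ A, h ≠ k → V (a h - a k) ≤ ρ h) ∧
    (∀ h ∈ A, ∀ x, x ≠ a h → (ρ h : WithTop ℚ) < V (x - a h) →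
      tropMap V A σ a c x = fun i => base h i + (w V (x - a h) - ρ h) * (σ h i : ℚ)) ∧
    (∀ x, (∀ h ∈ A, V (x - a h) ≤ ρ h) → tropMap V A σ a c x ∈ Sk) ∧
    (∀ p ∈ Sk, ∃ x, (∀ h ∈ A, V (x - a h) ≤ ρ h) ∧ tropMap V A σ a c x = p) ∧
    c ∈ Sk


end Valuation

/-! ### Growing a tropical line one vertex at a time -/

section Growth

variable {K : Type*} [Field K] (V : AddValuation K (WithTop ℚ))
variable {H : Type*} {n : ℕ}

lemma sum_weights_const (N : Finset H) (σ : H → Fin n → ℤ) (τ : Fin n → ℤ)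
    (hσ : ∑ h ∈ N, σ h = τ) (f : H → ℚ) (r : ℚ) (hf : ∀ h ∈ N, f h = r) (i : Fin n) :
    ∑ h ∈ N, (σ h i : ℚ) * f h = r * τ i := by
  have : ∑ h ∈ N, (σ h i : ℚ) = τ i := by
    rw [← hσ, Finset.sum_apply]; push_cast; rfl
  rw [← this, Finset.mul_sum]
  exact Finset.sum_congr rfl fun h hh => by rw [hf h hh, mul_comm]

lemma sum_weights_single (N : Finset H) (σ : H → Fin n → ℤ) (τ : Fin n → ℤ)
    (hσ : ∑ h ∈ N, σ h = τ) (f : H → ℚ) (r : ℚ) (k : H) (hk : k ∈ N)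
    (hf : ∀ h ∈ N, h ≠ k → f h = r) (i : Fin n) :
    ∑ h ∈ N, (σ h i : ℚ) * f h = r * τ i + (f k - r) * σ k i := by
  classical
  rw [← sum_weights_const N σ τ hσ (fun _ => r) r (fun _ _ => rfl) i,
    ← Finset.add_sum_erase N _ hk, ← Finset.add_sum_erase N (fun h => (σ h i : ℚ) * r) hk,
    Finset.sum_congr rfl (g := fun h => (σ h i : ℚ) * r) fun h hh => by
      rw [hf h (Finset.mem_of_mem_erase hh) (Finset.ne_of_mem_erase hh)]]
  ring

/-- The star with a single vertex `p`: put the centres in distinct residue classes. -/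
lemma realizes_star [IsAlgClosed K]
    (N : Finset H) (σ : H → Fin n → ℤ) (base : H → Fin n → ℚ) (p : Fin n → ℚ)
    (hσ : ∑ h ∈ N, σ h = 0) (hbase : ∀ h ∈ N, base h = p) :
    Realizes V N σ base {p} := by
  obtain ⟨θ, z, h1, h2, h3, h4⟩ := exists_residues V N
  refine ⟨θ, fun _ => 0, p, hσ, fun h hh k hk hne => (h2 h hh k hk hne).le, ?_, ?_, ?_, rfl⟩
  · intro h hh x hx hlt
    funext i
    have hlt' : 0 < V (x - θ h) := hlt
    simp only [tropMap]
    rw [sum_weights_single N σ 0 hσ (fun k => w V (x - θ k)) 0 h hh, hbase h hh]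
    · simp
    · intro k hk hne
      refine w_eq V ?_
      rw [val_sub_eq V (y := θ h) (by rw [h2 h hh k hk hne.symm]; exact hlt'),
        h2 h hh k hk hne.symm]
      rfl
  · intro x hx
    rw [Set.mem_singleton_iff]
    funext i
    simp only [tropMap]
    -- all the `x - θ h` have the same valuation, and the weights sum to zero
    obtain ⟨r, hr⟩ : ∃ r : ℚ, ∀ h ∈ N, w V (x - θ h) = r := by
      by_cases hex : ∃ h ∈ N, V (x - θ h) < 0
      · obtain ⟨h, hh, hlt⟩ := hex
        refine ⟨w V (x - θ h), fun k hk => ?_⟩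
        by_cases hkh : k = h
        · rw [hkh]
        · have : V (x - θ k) = V (x - θ h) := by
            rw [V.map_sub_swap x, V.map_sub_swap x]
            refine val_sub_eq V ?_
            rw [h2 k hk h hh hkh, V.map_sub_swap]
            exact hlt
          simp only [w, this]
      · push Not at hex
        exact ⟨0, fun h hh => w_eq V (le_antisymm (hx h hh) (hex h hh))⟩
    rw [sum_weights_const N σ 0 hσ (fun h => w V (x - θ h)) r hr i]
    simp
  · intro q hq
    refine ⟨z, fun h hh => (h4 h hh).le, ?_⟩
    rw [Set.mem_singleton_iff.1 hq]
    funext i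
    simp only [tropMap]
    rw [sum_weights_const N σ 0 hσ (fun h => w V (z - θ h)) 0
      (fun h hh => w_eq V (h4 h hh)) i]
    simp

/-- Growing the curve by one vertex: the ray `g` is cut at parameter `ℓ`, and rays `N` with
total weight `σ g` are attached at the cut.  The centre `a g` is replaced by centres
`a g + t θₕ`, with `v t = ρ g + ℓ` and the `θₕ` in distinct residue classes; outside the
disc `v (x - a g) ≥ ρ g + ℓ` this does not affect the tropical map. -/
lemma realizes_grow [IsAlgClosed K] (hsurj : ∀ q : ℚ, ∃ x : K, V x = (q : WithTop ℚ))
    [DecidableEq H] (A N : Finset H) (σ : H → Fin n → ℤ) (base : H → Fin n → ℚ)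
    (Sk : Set (Fin n → ℚ)) (hR : Realizes V A σ base Sk) (g : H) (hg : g ∈ A)
    (hN : Disjoint A N) (hσN : ∑ h ∈ N, σ h = σ g) (ℓ : ℚ) (hℓ : 0 < ℓ)
    (hbase : ∀ h ∈ N, base h = fun i => base g i + ℓ * (σ g i : ℚ)) :
    Realizes V (A.erase g ∪ N) σ base
      (Sk ∪ {p | ∃ s : ℚ, 0 < s ∧ s ≤ ℓ ∧ p = fun i => base g i + s * (σ g i : ℚ)}) := by
  obtain ⟨a, ρ, c, hsum, hsep, hnear, hfar, hfar', hc⟩ := hR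
  obtain ⟨θ, z, h1, h2, h3, h4⟩ := exists_residues V N
  set R : ℚ := ρ g + ℓ with hRdef
  have hgR : ρ g < R := by linarith
  have hgR' : (ρ g : WithTop ℚ) < R := by exact_mod_cast hgR
  obtain ⟨t, ht⟩ := hsurj R
  have ht0 : t ≠ 0 := by
    rintro rfl
    rw [V.map_zero] at ht
    exact WithTop.top_ne_coe ht
  have hN' : Disjoint (A.erase g) N := hN.mono_left (Finset.erase_subset g A)
  have hnotN : ∀ h ∈ A.erase g, h ∉ N := fun h hh => Finset.disjoint_left.1 hN' hh
  set b : H → K := fun h => a g + t * θ h with hb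
  set a' : H → K := fun h => if h ∈ N then b h else a h with ha'
  set ρ' : H → ℚ := fun h => if h ∈ N then R else ρ h with hρ'
  have ha'N : ∀ h ∈ N, a' h = b h := fun h hh => if_pos hh
  have ha'A : ∀ h ∈ A.erase g, a' h = a h := fun h hh => if_neg (hnotN h hh)
  have hρ'N : ∀ h ∈ N, ρ' h = R := fun h hh => if_pos hh
  have hρ'A : ∀ h ∈ A.erase g, ρ' h = ρ h := fun h hh => if_neg (hnotN h hh)
  have hbg : ∀ h ∈ N, (R : WithTop ℚ) ≤ V (a g - b h) := by
    intro h hh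
    have : a g - b h = -(t * θ h) := by simp [hb]
    rw [this, V.map_neg, V.map_mul, ht]
    exact le_add_of_nonneg_right (h1 h hh)
  have hbb : ∀ h ∈ N, ∀ k ∈ N, h ≠ k → V (b h - b k) = R := by
    intro h hh k hk hne
    have : b h - b k = t * (θ h - θ k) := by simp only [hb]; ring
    rw [this, V.map_mul, ht, h2 h hh k hk hne, add_zero]
  have hsepg : ∀ h ∈ A.erase g, V (a g - a h) ≤ ρ g ∧ V (a g - a h) ≤ ρ h := by
    intro h hh
    refine ⟨hsep g hg h (Finset.mem_of_mem_erase hh) (Finset.ne_of_mem_erase hh).symm, ?_⟩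
    rw [V.map_sub_swap]
    exact hsep h (Finset.mem_of_mem_erase hh) g hg (Finset.ne_of_mem_erase hh)
  have hbA : ∀ h ∈ A.erase g, ∀ k ∈ N, V (b k - a h) = V (a g - a h) := by
    intro h hh k hk
    refine val_sub_eq V ?_
    rw [V.map_sub_swap (b k)]
    exact ((hsepg h hh).1.trans_lt hgR').trans_le (hbg k hk)
  have hF : ∀ x i, tropMap V A σ a c x i =
      c i + ((σ g i : ℚ) * w V (x - a g) +
        ∑ h ∈ A.erase g, (σ h i : ℚ) * w V (x - a h)) := by
    intro x i
    simp only [tropMap]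
    rw [← Finset.add_sum_erase A _ hg]
  have hF' : ∀ x i, tropMap V (A.erase g ∪ N) σ a' c x i =
      c i + (∑ h ∈ A.erase g, (σ h i : ℚ) * w V (x - a h) +
        ∑ h ∈ N, (σ h i : ℚ) * w V (x - b h)) := by
    intro x i
    simp only [tropMap]
    rw [Finset.sum_union hN',
      Finset.sum_congr rfl (fun h hh => by rw [ha'A h hh] :
        ∀ h ∈ A.erase g, (σ h i : ℚ) * w V (x - a' h) = (σ h i : ℚ) * w V (x - a h)),
      Finset.sum_congr rfl (fun h hh => by rw [ha'N h hh] :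
        ∀ h ∈ N, (σ h i : ℚ) * w V (x - a' h) = (σ h i : ℚ) * w V (x - b h))]
  have hout_val : ∀ x, V (x - a g) < R → ∀ h ∈ N, V (x - b h) = V (x - a g) := by
    intro x hx h hh
    rw [V.map_sub_swap x, V.map_sub_swap x]
    refine val_sub_eq V ?_
    rw [V.map_sub_swap (b h), V.map_sub_swap (a g) x]
    exact hx.trans_le (hbg h hh)
  have hout : ∀ x, V (x - a g) < R →
      tropMap V (A.erase g ∪ N) σ a' c x = tropMap V A σ a c x := by
    intro x hx
    funext i
    rw [hF, hF', sum_weights_const N σ (σ g) hσN (fun h => w V (x - b h)) (w V (x - a g))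
      (fun h hh => by simp only [w, hout_val x hx h hh])]
    ring
  have hin_val : ∀ x, (R : WithTop ℚ) ≤ V (x - a g) → ∀ h ∈ N, (R : WithTop ℚ) ≤ V (x - b h) :=
    fun x hx h hh => val_sub_ge V hx (hbg h hh)
  -- inside the disc only the new centres matter; the rest is constant, and is computed
  -- from the old map at the point `a g + t` of the ray
  have hin : ∀ x, (R : WithTop ℚ) ≤ V (x - a g) → ∀ i,
      tropMap V (A.erase g ∪ N) σ a' c x i =
        base g i + ℓ * (σ g i : ℚ) +
          (∑ h ∈ N, (σ h i : ℚ) * w V (x - b h) - R * (σ g i : ℚ)) := by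
    intro x hx i
    have hxt : ∀ y, (R : WithTop ℚ) ≤ V (y - a g) → ∀ h ∈ A.erase g,
        V (y - a h) = V (a g - a h) := fun y hy h hh =>
      val_sub_eq V (((hsepg h hh).1.trans_lt hgR').trans_le hy)
    have hVt : V (a g + t - a g) = R := by rw [add_sub_cancel_left, ht]
    have e1 := congrFun (hnear g hg (a g + t) (by simpa using ht0) (by rw [hVt]; exact hgR')) i
    rw [hF, w_eq V hVt] at e1
    have e2 : ∑ h ∈ A.erase g, (σ h i : ℚ) * w V (a g + t - a h) =
        ∑ h ∈ A.erase g, (σ h i : ℚ) * w V (x - a h) :=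
      Finset.sum_congr rfl fun h hh => by
        simp only [w, hxt x hx h hh, hxt (a g + t) hVt.ge h hh]
    rw [e2] at e1
    have e3 : R - ρ g = ℓ := by rw [hRdef]; ring
    rw [e3] at e1
    rw [hF']
    linarith
  have hmem : ∀ {h}, h ∈ A.erase g ∪ N ↔ h ∈ A.erase g ∨ h ∈ N := Finset.mem_union
  refine ⟨a', ρ', c, ?_, ?_, ?_, ?_, ?_, Or.inl hc⟩
  · rw [Finset.sum_union hN', hσN, add_comm, Finset.add_sum_erase A _ hg, hsum]
  · intro h hh k hk hne
    rcases hmem.1 hh with hh | hh <;> rcases hmem.1 hk with hk | hk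
    · rw [ha'A h hh, ha'A k hk, hρ'A h hh]
      exact hsep h (Finset.mem_of_mem_erase hh) k (Finset.mem_of_mem_erase hk) hne
    · rw [ha'A h hh, ha'N k hk, hρ'A h hh, V.map_sub_swap, hbA h hh k hk]
      exact (hsepg h hh).2
    · rw [ha'N h hh, ha'A k hk, hρ'N h hh, hbA k hk h hh]
      exact (hsepg k hk).1.trans hgR'.le
    · rw [ha'N h hh, ha'N k hk, hρ'N h hh]
      exact (hbb h hh k hk hne).le
  · intro h hh x hx hlt
    rcases hmem.1 hh with hh | hh
    · rw [ha'A h hh, hρ'A h hh] at hlt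
      rw [ha'A h hh] at hx ⊢
      rw [hρ'A h hh]
      have hx' : V (x - a g) < R := by
        have : V (x - a g) = V (a h - a g) := by
          refine val_sub_eq V (lt_of_le_of_lt ?_ hlt)
          rw [V.map_sub_swap]; exact (hsepg h hh).2
        rw [this, V.map_sub_swap]
        exact (hsepg h hh).1.trans_lt hgR'
      rw [hout x hx']
      exact hnear h (Finset.mem_of_mem_erase hh) x hx hlt
    · rw [ha'N h hh, hρ'N h hh] at hlt
      rw [ha'N h hh] at hx ⊢
      rw [hρ'N h hh]
      have hx' : (R : WithTop ℚ) ≤ V (x - a g) := by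
        refine val_sub_ge V hlt.le ?_
        rw [V.map_sub_swap]; exact hbg h hh
      funext i
      rw [hin x hx', hbase h hh,
        sum_weights_single N σ (σ g) hσN (fun k => w V (x - b k)) R h hh]
      · ring
      · intro k hk hne
        refine w_eq V ?_
        rw [val_sub_eq V (y := b h) (by rw [hbb h hh k hk hne.symm]; exact hlt),
          hbb h hh k hk hne.symm]
  · intro x hx
    have hxA : ∀ h ∈ A.erase g, V (x - a h) ≤ ρ h := fun h hh => by
      simpa only [ha'A h hh, hρ'A h hh] using hx h (hmem.2 (Or.inl hh))
    have hxN : ∀ h ∈ N, V (x - b h) ≤ R := fun h hh => by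
      simpa only [ha'N h hh, hρ'N h hh] using hx h (hmem.2 (Or.inr hh))
    by_cases hxR : (R : WithTop ℚ) ≤ V (x - a g)
    · right
      refine ⟨ℓ, hℓ, le_rfl, ?_⟩
      funext i
      rw [hin x hxR, sum_weights_const N σ (σ g) hσN (fun k => w V (x - b k)) R
        (fun h hh => w_eq V (le_antisymm (hxN h hh) (hin_val x hxR h hh)))]
      ring
    · push Not at hxR
      rw [hout x hxR]
      by_cases hxg : V (x - a g) ≤ ρ g
      · left
        refine hfar x fun h hh => ?_
        by_cases hhg : h = g
        · rw [hhg]; exact hxg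
        · exact hxA h (Finset.mem_erase.2 ⟨hhg, hh⟩)
      · right
        push Not at hxg
        have hxne : x ≠ a g := by
          rintro rfl
          rw [sub_self, V.map_zero] at hxR
          exact not_top_lt hxR
        have hw := coe_w V (sub_ne_zero.2 hxne)
        rw [← hw] at hxg hxR
        refine ⟨w V (x - a g) - ρ g, ?_, ?_, hnear g hg x hxne (hw ▸ hxg)⟩
        · have := WithTop.coe_lt_coe.1 hxg; linarith
        · have := WithTop.coe_lt_coe.1 hxR; linarith
  · rintro p (hp | ⟨s, hs0, hsℓ, rfl⟩)
    · obtain ⟨x, hx, rfl⟩ := hfar' p hp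
      have hxR : V (x - a g) < R := (hx g hg).trans_lt hgR'
      refine ⟨x, fun h hh => ?_, hout x hxR⟩
      rcases hmem.1 hh with hh | hh
      · rw [ha'A h hh, hρ'A h hh]; exact hx h (Finset.mem_of_mem_erase hh)
      · rw [ha'N h hh, hρ'N h hh, hout_val x hxR h hh]; exact hxR.le
    · have hρA : ∀ x, (ρ g : WithTop ℚ) < V (x - a g) → ∀ h ∈ A.erase g,
          V (x - a' h) ≤ ρ' h := by
        intro x hx h hh
        rw [ha'A h hh, hρ'A h hh, val_sub_eq V ((hsepg h hh).1.trans_lt hx)]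
        exact (hsepg h hh).2
      rcases hsℓ.lt_or_eq with hlt | rfl
      · obtain ⟨y, hy⟩ := hsurj (ρ g + s)
        have hVy : V (a g + y - a g) = ((ρ g + s : ℚ) : WithTop ℚ) := by
          rw [add_sub_cancel_left, hy]
        have hlo : (ρ g : WithTop ℚ) < V (a g + y - a g) := by
          rw [hVy, WithTop.coe_lt_coe]; linarith
        have hhi : V (a g + y - a g) < R := by
          rw [hVy, WithTop.coe_lt_coe]; linarith
        refine ⟨a g + y, fun h hh => ?_, ?_⟩
        · rcases hmem.1 hh with hh | hh
          · exact hρA _ hlo h hh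
          · rw [ha'N h hh, hρ'N h hh, hout_val _ hhi h hh]; exact hhi.le
        · rw [hout _ hhi, hnear g hg _ ?_ hlo, w_eq V hVy]
          · funext i; ring
          · intro e
            rw [e, sub_self, V.map_zero] at hhi
            exact not_top_lt hhi
      · have hVz : (R : WithTop ℚ) ≤ V (a g + t * z - a g) := by
          rw [add_sub_cancel_left, V.map_mul, ht]
          exact le_add_of_nonneg_right h3
        have hVzb : ∀ h ∈ N, V (a g + t * z - b h) = R := by
          intro h hh
          have : a g + t * z - b h = t * (z - θ h) := by simp only [hb]; ring
          rw [this, V.map_mul, ht, h4 h hh, add_zero]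
        refine ⟨a g + t * z, fun h hh => ?_, ?_⟩
        · rcases hmem.1 hh with hh | hh
          · exact hρA _ (hgR'.trans_le hVz) h hh
          · rw [ha'N h hh, hρ'N h hh, hVzb h hh]
        · funext i
          rw [hin _ hVz, sum_weights_const N σ (σ g) hσN
            (fun k => w V (a g + t * z - b k)) R (fun h hh => w_eq V (hVzb h hh))]
          ring

end Growth

/-! ### Exploring the tree -/

section Curve

variable {n : ℕ} (C : ZTC n)

/-- Half-edges of the curve: the rays, and each bounded edge with a choice of endpoint
(`false` for the source, `true` for the target). -/
abbrev HalfEdge : Type := Fin C.ER ⊕ (Fin C.EB × Bool)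

/-- The vertex at which a half-edge is attached. -/
def hsrc : HalfEdge C → Fin C.V
  | Sum.inl e => C.rsrc e
  | Sum.inr (e, false) => C.bsrc e
  | Sum.inr (e, true) => C.bdst e

/-- The weighted outgoing direction `m(e) ρ_u(e)` of a half-edge `e` at `u`. -/
def hwt : HalfEdge C → Fin n → ℤ
  | Sum.inl e => (C.mR e : ℤ) • C.rdir e
  | Sum.inr (e, false) => (C.mB e : ℤ) • C.bdir e
  | Sum.inr (e, true) => -((C.mB e : ℤ) • C.bdir e)

/-- The half-edges leaving the vertices of `U`, apart from the edges of `E`: the rays of the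
partial curve with vertices `U` and bounded edges `E`. -/
noncomputable def front (U : Finset (Fin C.V)) (E : Finset (Fin C.EB)) :
    Finset (HalfEdge C) :=
  Finset.univ.filter fun h => hsrc C h ∈ U ∧ ∀ e b, h = Sum.inr (e, b) → e ∉ E

/-- The image of the vertices `U` and of the bounded edges `E`. -/
def skel (U : Finset (Fin C.V)) (E : Finset (Fin C.EB)) : Set (Fin n → ℚ) :=
  {p | (∃ u ∈ U, p = C.pos u) ∨ ∃ e ∈ E, ∃ s : ℚ, 0 ≤ s ∧ s ≤ C.blen e ∧
    p = fun i => C.pos (C.bsrc e) i + s * (C.bdir e i : ℚ)}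

variable {C}

lemma sum_hwt (hval : C.Valid) (u : Fin C.V) :
    ∑ h ∈ Finset.univ.filter (fun h : HalfEdge C => hsrc C h = u), hwt C h = 0 := by
  have h := hval.2.2.2.2.2 u
  rw [Finset.sum_filter, Fintype.sum_sum_type, Fintype.sum_prod_type]
  rw [add_comm] at h
  refine Eq.trans ?_ h
  congr 1
  refine Finset.sum_congr rfl fun e _ => ?_
  rw [Fintype.sum_bool, smul_add, add_comm]
  congr 1
  · by_cases hu : C.bsrc e = u <;> simp [hsrc, hwt, hu]
  · by_cases hu : C.bdst e = u <;> simp [hsrc, hwt, hu]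

/-- The length of a bounded edge in the source of the tropical map, where the edge is
stretched by its multiplicity. Contracted edges get an arbitrary positive length. -/
lemma exists_length (hval : C.Valid) (e : Fin C.EB) (b : Bool) :
    ∃ ℓ : ℚ, 0 < ℓ ∧
      (C.pos (hsrc C (Sum.inr (e, !b))) = fun i =>
        C.pos (hsrc C (Sum.inr (e, b))) i + ℓ * (hwt C (Sum.inr (e, b)) i : ℚ)) ∧
      ∀ p : Fin n → ℚ,
        (∃ s : ℚ, 0 ≤ s ∧ s ≤ ℓ ∧
          p = fun i => C.pos (hsrc C (Sum.inr (e, b))) i + s * (hwt C (Sum.inr (e, b)) i : ℚ)) ↔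
        (∃ s : ℚ, 0 ≤ s ∧ s ≤ C.blen e ∧
          p = fun i => C.pos (C.bsrc e) i + s * (C.bdir e i : ℚ)) := by
  have hpos := hval.2.2.2.2.1 e
  have hm : (0 : ℚ) < C.mB e := by exact_mod_cast hval.1 e
  have hpos' : ∀ i, C.pos (C.bdst e) i = C.pos (C.bsrc e) i + C.blen e * (C.bdir e i : ℚ) :=
    fun i => by
      have : C.pos (C.bdst e) i - C.pos (C.bsrc e) i = C.blen e * (C.bdir e i : ℚ) :=
        congrFun hpos i
      linarith
  rcases hval.2.2.2.1 e with ⟨hlen, -⟩ | ⟨hlen, hdir⟩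
  · refine ⟨C.blen e / C.mB e, by positivity, ?_, fun p => ?_⟩
    · funext i
      cases b
      · simp only [hsrc, hwt, Bool.not_false, hpos' i, Pi.smul_apply, smul_eq_mul]
        push_cast; field_simp
      · simp only [hsrc, hwt, Bool.not_true, hpos' i, Pi.smul_apply, Pi.neg_apply, smul_eq_mul]
        push_cast; field_simp; ring
    · cases b
      · constructor
        · rintro ⟨s, h0, h1, rfl⟩
          refine ⟨s * C.mB e, by positivity, (le_div_iff₀ hm).1 h1, ?_⟩
          funext i
          simp only [hsrc, hwt, Pi.smul_apply, smul_eq_mul]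
          push_cast; ring
        · rintro ⟨s, h0, h1, rfl⟩
          refine ⟨s / C.mB e, by positivity, by gcongr, ?_⟩
          funext i
          simp only [hsrc, hwt, Pi.smul_apply, smul_eq_mul]
          push_cast; field_simp
      · constructor
        · rintro ⟨s, h0, h1, rfl⟩
          refine ⟨C.blen e - s * C.mB e, sub_nonneg.2 ((le_div_iff₀ hm).1 h1),
            sub_le_self _ (by positivity), ?_⟩
          funext i
          simp only [hsrc, hwt, hpos' i, Pi.smul_apply, Pi.neg_apply, smul_eq_mul]
          push_cast; ring
        · rintro ⟨s, h0, h1, rfl⟩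
          refine ⟨(C.blen e - s) / C.mB e, div_nonneg (by linarith) hm.le,
            by gcongr; linarith, ?_⟩
          funext i
          simp only [hsrc, hwt, hpos' i, Pi.smul_apply, Pi.neg_apply, smul_eq_mul]
          push_cast; field_simp; ring
  · have hz : ∀ i, hwt C (Sum.inr (e, b)) i = 0 := by
      intro i; cases b <;> simp [hwt, hdir]
    have hs : ∀ b', C.pos (hsrc C (Sum.inr (e, b'))) = C.pos (C.bsrc e) := by
      intro b'; funext i; cases b' <;> simp [hsrc, hpos', hlen]
    refine ⟨1, one_pos, ?_, fun p => ?_⟩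
    · simp [hs, hz]
    · simp only [hs, hz, hdir, hlen]
      constructor
      · rintro ⟨s, -, -, rfl⟩
        exact ⟨0, le_rfl, le_rfl, by simp⟩
      · rintro ⟨s, -, -, rfl⟩
        exact ⟨0, le_rfl, zero_le_one, by simp⟩

/-- In a connected graph some edge leaves every nonempty proper set of vertices. -/
lemma exists_crossing (hconn : C.Connected) (U : Finset (Fin C.V)) (u w : Fin C.V)
    (hu : u ∈ U) (hw : w ∉ U) :
    ∃ e b, hsrc C (Sum.inr (e, b)) ∈ U ∧ hsrc C (Sum.inr (e, !b)) ∉ U := by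
  have : ∀ w, Relation.ReflTransGen C.Adj u w → w ∉ U →
      ∃ x y, C.Adj x y ∧ x ∈ U ∧ y ∉ U := by
    intro w h
    induction h with
    | refl => exact fun h => absurd hu h
    | @tail x y _ hxy ih =>
      intro hy
      by_cases hx : x ∈ U
      · exact ⟨x, y, hxy, hx, hy⟩
      · exact ih hx
  obtain ⟨x, y, ⟨e, ⟨rfl, rfl⟩ | ⟨rfl, rfl⟩⟩, hx, hy⟩ := this w (hconn u w) hw
  · exact ⟨e, false, hx, hy⟩
  · exact ⟨e, true, hx, hy⟩

lemma hsrc_mem_of_edge {U : Finset (Fin C.V)} {E : Finset (Fin C.EB)}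
    (hE : ∀ e ∈ E, C.bsrc e ∈ U ∧ C.bdst e ∈ U) {e : Fin C.EB} (he : e ∈ E) (b : Bool) :
    hsrc C (Sum.inr (e, b)) ∈ U := by
  cases b
  · exact (hE e he).1
  · exact (hE e he).2

variable {K : Type*} [Field K] [IsAlgClosed K] (V : AddValuation K (WithTop ℚ))

/-- Exploring the tree from a vertex, one edge and one vertex at a time, every partial curve
is realized. Each step adds exactly one edge, so that once all vertices are reached
the relation `V = EB + 1` forces all bounded edges to have been used. -/
lemma exists_partial (hsurj : ∀ q : ℚ, ∃ x : K, V x = (q : WithTop ℚ))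
    (hval : C.Valid) (hconn : C.Connected) (k : ℕ) (hk : k + 1 ≤ C.V) :
    ∃ (U : Finset (Fin C.V)) (E : Finset (Fin C.EB)), U.card = k + 1 ∧ E.card = k ∧
      (∀ e ∈ E, C.bsrc e ∈ U ∧ C.bdst e ∈ U) ∧
      Realizes V (front C U E) (hwt C) (fun h => C.pos (hsrc C h)) (skel C U E) := by
  induction k with
  | zero =>
    let u : Fin C.V := ⟨0, hk⟩
    refine ⟨{u}, ∅, by simp, by simp, by simp, ?_⟩
    have hfront : front C {u} ∅ = Finset.univ.filter (fun h => hsrc C h = u) := by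
      ext h; simp [front]
    have hskel : skel C {u} ∅ = {C.pos u} := by
      ext p; simp [skel]
    rw [hfront, hskel]
    exact realizes_star V _ _ _ _ (sum_hwt hval u) fun h hh => by
      simp only [(Finset.mem_filter.1 hh).2]
  | succ k ih =>
    obtain ⟨U, E, hU, hE, hEU, hR⟩ := ih (by omega)
    obtain ⟨u, hu⟩ : U.Nonempty := Finset.card_pos.1 (by omega)
    obtain ⟨w, hw⟩ : ∃ w, w ∉ U := by
      by_contra! hall
      have := Finset.card_eq_of_equiv_fin (s := U)
        ((Equiv.subtypeUnivEquiv hall))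
      omega
    obtain ⟨e, b, hg, hg'⟩ := exists_crossing hconn U u w hu hw
    clear hw w
    set g : HalfEdge C := Sum.inr (e, b) with hgdef
    set g' : HalfEdge C := Sum.inr (e, !b) with hgdef'
    set y := hsrc C g' with hy
    have heE : e ∉ E := fun he => hg' (hsrc_mem_of_edge hEU he _)
    obtain ⟨ℓ, hℓ, hend, hseg⟩ := exists_length hval e b
    set N := (Finset.univ.filter (fun h : HalfEdge C => hsrc C h = y)).erase g' with hNdef
    have hmemN : ∀ h, h ∈ N ↔ h ≠ g' ∧ hsrc C h = y := by intro h; simp [hNdef]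
    have hmemF : ∀ U E h, h ∈ front C U E ↔
        hsrc C h ∈ U ∧ ∀ e b, h = Sum.inr (e, b) → e ∉ E := by
      intro U E h; simp [front]
    have hgF : g ∈ front C U E := by
      rw [hmemF]
      refine ⟨hg, fun e' b' h => ?_⟩
      have : e = e' := by simpa [hgdef] using congrArg (Sum.map id Prod.fst) h
      rwa [← this]
    have hdisj : Disjoint (front C U E) N := by
      rw [Finset.disjoint_left]
      intro h h1 h2
      rw [hmemF] at h1
      rw [hmemN] at h2
      exact hg' (h2.2 ▸ h1.1)
    have hwt' : hwt C g' = - hwt C g := by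
      cases b <;> simp [hgdef, hgdef', hwt]
    have hsumN : ∑ h ∈ N, hwt C h = hwt C g := by
      have h1 := sum_hwt hval y
      rw [← Finset.add_sum_erase _ _ (show g' ∈ Finset.univ.filter
        (fun h : HalfEdge C => hsrc C h = y) by simp [hy]), hwt'] at h1
      exact (neg_add_eq_zero.1 h1).symm
    have hR' := realizes_grow V hsurj (front C U E) N (hwt C) (fun h => C.pos (hsrc C h))
      (skel C U E) hR g hgF hdisj hsumN ℓ hℓ (fun h hh => by
        simp only [((hmemN h).1 hh).2]; exact hend)
    refine ⟨insert y U, insert e E, ?_, ?_, ?_, ?_⟩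
    · rw [Finset.card_insert_of_notMem hg', hU]
    · rw [Finset.card_insert_of_notMem heE, hE]
    · have hge : hsrc C g ∈ insert y U := Finset.mem_insert_of_mem hg
      have hge' : hsrc C g' ∈ insert y U := Finset.mem_insert_self _ _
      intro e' he'
      rcases Finset.mem_insert.1 he' with rfl | he'
      · cases b
        · exact ⟨hge, hge'⟩
        · exact ⟨hge', hge⟩
      · exact ⟨Finset.mem_insert_of_mem (hEU e' he').1, Finset.mem_insert_of_mem (hEU e' he').2⟩
    · convert hR' using 1
      · ext h
        rw [Finset.mem_union, Finset.mem_erase, hmemN, hmemF, hmemF]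
        constructor
        · rintro ⟨h1, h2⟩
          have hne : ∀ b', h ≠ Sum.inr (e, b') := fun b' hb =>
            h2 e b' hb (Finset.mem_insert_self _ _)
          rcases Finset.mem_insert.1 h1 with h1 | h1
          · exact Or.inr ⟨hne _, h1⟩
          · exact Or.inl ⟨hne _, h1, fun e' b' hb he' =>
              h2 e' b' hb (Finset.mem_insert_of_mem he')⟩
        · rintro (⟨h1, h2, h3⟩ | ⟨h1, h2⟩)
          · refine ⟨Finset.mem_insert_of_mem h2, fun e' b' hb he' => ?_⟩
            rcases Finset.mem_insert.1 he' with rfl | he'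
            · by_cases hbb : b' = b
              · exact h1 (by rw [hb, hbb])
              · have : b' = !b := by cases b <;> cases b' <;> simp_all
                refine hg' ?_
                rw [hy, hgdef', ← this, ← hb]
                exact h2
            · exact h3 e' b' hb he'
          · refine ⟨h2 ▸ Finset.mem_insert_self _ _, fun e' b' hb he' => ?_⟩
            rcases Finset.mem_insert.1 he' with rfl | he'
            · by_cases hbb : b' = b
              · refine hg' ?_
                rw [← h2, hb, hbb]
                exact hg
              · have : b' = !b := by cases b <;> cases b' <;> simp_all
                exact h1 (by rw [hb, this])
            · refine hg' ?_
              rw [← h2, hb]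
              exact hsrc_mem_of_edge hEU he' _
      · ext p
        simp only [Set.mem_union]
        constructor
        · rintro (⟨x, hx, rfl⟩ | ⟨e', he', hp⟩)
          · rcases Finset.mem_insert.1 hx with rfl | hx
            · exact Or.inr ⟨ℓ, hℓ, le_rfl, hend⟩
            · exact Or.inl (Or.inl ⟨x, hx, rfl⟩)
          · rcases Finset.mem_insert.1 he' with rfl | he'
            · obtain ⟨s, h0, h1, rfl⟩ := (hseg p).2 hp
              rcases h0.eq_or_lt with rfl | h0
              · exact Or.inl (Or.inl ⟨_, hg, by simp only [zero_mul, add_zero]; rfl⟩)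
              · exact Or.inr ⟨s, h0, h1, rfl⟩
            · exact Or.inl (Or.inr ⟨e', he', hp⟩)
        · rintro ((⟨x, hx, rfl⟩ | ⟨e', he', hp⟩) | ⟨s, h0, h1, hp⟩)
          · exact Or.inl ⟨x, Finset.mem_insert_of_mem hx, rfl⟩
          · exact Or.inr ⟨e', Finset.mem_insert_of_mem he', hp⟩
          · exact Or.inr ⟨e, Finset.mem_insert_self _ _, (hseg p).1 ⟨s, h0.le, h1, hp⟩⟩

/-- The whole tree is realized: the image of the curve is the set of values of the tropical
map with one point `a e` for each ray `e`, weighted by `m(e)` times its direction. -/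
lemma exists_points (hsurj : ∀ q : ℚ, ∃ x : K, V x = (q : WithTop ℚ))
    (hval : C.Valid) (htree : C.IsTree) :
    ∃ (a : Fin C.ER → K) (c : Fin n → ℚ), Function.Injective a ∧
      (∑ e, (C.mR e : ℤ) • C.rdir e = 0) ∧ c ∈ C.ImageSet ∧
      ∀ p, p ∈ C.ImageSet ↔ ∃ x, (∀ e, x ≠ a e) ∧ p = fun i =>
        c i + ∑ e, (((C.mR e : ℤ) * C.rdir e i : ℤ) : ℚ) * w V (x - a e) := by
  obtain ⟨U, E, hU, hE, -, a, ρ, c, hsum, hsep, hnear, hfar, hfar', hc⟩ :=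
    exists_partial V hsurj hval htree.1 C.EB htree.2.ge
  have hUu : U = Finset.univ := Finset.card_eq_iff_eq_univ U |>.1 (by
    rw [hU, Fintype.card_fin, htree.2])
  have hEu : E = Finset.univ := Finset.card_eq_iff_eq_univ E |>.1 (by rw [hE, Fintype.card_fin])
  have hfront : front C U E = Finset.univ.map Function.Embedding.inl := by
    ext h
    rcases h with e | ⟨e, b⟩
    · simp [front, hUu]
    · simp only [front, hUu, hEu, Finset.mem_filter, Finset.mem_map, Finset.mem_univ, true_and]
      exact iff_of_false (fun h => h e b rfl trivial) (by simp)
  have hmem : ∀ e : Fin C.ER, (Sum.inl e : HalfEdge C) ∈ front C U E := by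
    intro e; simp [hfront]
  have hmem' : ∀ h ∈ front C U E, ∃ e, h = Sum.inl e := by
    intro h hh; rw [hfront] at hh; simp only [Finset.mem_map] at hh
    obtain ⟨e, -, rfl⟩ := hh; exact ⟨e, rfl⟩
  have htrop : ∀ x, tropMap V (front C U E) (hwt C) a c x = fun i =>
      c i + ∑ e, (((C.mR e : ℤ) * C.rdir e i : ℤ) : ℚ) * w V (x - a (Sum.inl e)) := by
    intro x; funext i
    simp only [tropMap, hfront, Finset.sum_map]
    rfl
  have hskel : skel C U E ⊆ C.ImageSet := by
    rintro p (⟨u, -, rfl⟩ | ⟨e, -, hp⟩)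
    · exact Or.inl ⟨u, rfl⟩
    · exact Or.inr (Or.inl ⟨e, hp⟩)
  refine ⟨fun e => a (Sum.inl e), c, ?_, ?_, hskel hc, fun p => ⟨fun hp => ?_, ?_⟩⟩
  · intro e e' (h : a (Sum.inl e) = a (Sum.inl e'))
    by_contra hne
    have := hsep _ (hmem e) _ (hmem e') (by simpa using hne)
    rw [h, sub_self, V.map_zero] at this
    exact absurd this (not_le.2 (WithTop.coe_lt_top _))
  · rw [← hsum, hfront, Finset.sum_map]; rfl
  · have hsk : p ∈ skel C U E → ∃ x, (∀ e, x ≠ a (Sum.inl e)) ∧ p = fun i =>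
        c i + ∑ e, (((C.mR e : ℤ) * C.rdir e i : ℤ) : ℚ) * w V (x - a (Sum.inl e)) := by
      intro hp
      obtain ⟨x, hx, rfl⟩ := hfar' p hp
      refine ⟨x, fun e h => ?_, htrop x⟩
      have := hx _ (hmem e)
      rw [h, sub_self, V.map_zero] at this
      exact absurd this (not_le.2 (WithTop.coe_lt_top _))
    rcases hp with ⟨u, rfl⟩ | ⟨e, hp⟩ | ⟨e, s, h0, rfl⟩
    · exact hsk (Or.inl ⟨u, by simp [hUu], rfl⟩)
    · exact hsk (Or.inr ⟨e, by simp [hEu], hp⟩)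
    · rcases h0.eq_or_lt with rfl | h0
      · exact hsk (Or.inl ⟨C.rsrc e, by simp [hUu], by simp⟩)
      · have hm : (0 : ℚ) < C.mR e := by exact_mod_cast hval.2.1 e
        -- the map has slope `mR e` along the ray, so the parameter is divided by `mR e`
        obtain ⟨y, hy⟩ := hsurj (ρ (Sum.inl e) + s / C.mR e)
        have hs : 0 < s / C.mR e := div_pos h0 hm
        have hy0 : y ≠ 0 := by
          rintro rfl
          rw [V.map_zero] at hy
          exact WithTop.top_ne_coe hy
        have hVy : V (a (Sum.inl e) + y - a (Sum.inl e)) =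
            ((ρ (Sum.inl e) + s / C.mR e : ℚ) : WithTop ℚ) := by
          rw [add_sub_cancel_left, hy]
        have hlt : (ρ (Sum.inl e) : WithTop ℚ) < V (a (Sum.inl e) + y - a (Sum.inl e)) := by
          rw [hVy, WithTop.coe_lt_coe]; linarith
        refine ⟨a (Sum.inl e) + y, fun e' h => ?_, ?_⟩
        · by_cases hee : e = e'
          · subst hee; simp [hy0] at h
          · have h1 := hsep _ (hmem e) _ (hmem e') (by simpa using hee)
            have h' : a (Sum.inl e) + y = a (Sum.inl e') := h
            rw [← h', V.map_sub_swap] at h1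
            exact absurd h1 (not_le.2 hlt)
        · rw [← htrop, hnear _ (hmem e) _ (by simpa using hy0) hlt, w_eq V hVy]
          funext i
          simp only [hsrc, hwt, Pi.smul_apply, smul_eq_mul]
          push_cast; field_simp; ring
  · rintro ⟨x, hx, rfl⟩
    rw [← htrop]
    by_cases hx' : ∀ h ∈ front C U E, V (x - a h) ≤ ρ h
    · exact hskel (hfar x hx')
    · push Not at hx'
      obtain ⟨h, hh, hlt⟩ := hx'
      obtain ⟨e, rfl⟩ := hmem' h hh
      rw [hnear _ hh x (hx e) hlt]
      rw [← coe_w V (sub_ne_zero.2 (hx e)), WithTop.coe_lt_coe] at hlt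
      refine Or.inr (Or.inr ⟨e, (w V (x - a (Sum.inl e)) - ρ (Sum.inl e)) * C.mR e,
        mul_nonneg (by linarith) (by positivity), ?_⟩)
      funext i
      simp only [hsrc, hwt, Pi.smul_apply, smul_eq_mul]
      push_cast; ring

end Curve

/-! ### Orders and values of products of linear factors -/

section RationalFunctions

open Polynomial

variable {K : Type*} [Field K] {ι : Type*} [Fintype ι]

/-- The polynomial `∏ₑ (X - aₑ) ^ kₑ`. -/
noncomputable def linProd (a : ι → K) (k : ι → ℕ) : K[X] := ∏ e, (X - C (a e)) ^ k e

lemma linProd_monic (a : ι → K) (k : ι → ℕ) : (linProd a k).Monic :=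
  monic_prod_of_monic _ _ fun e _ => (monic_X_sub_C (a e)).pow _

lemma linProd_natDegree (a : ι → K) (k : ι → ℕ) : (linProd a k).natDegree = ∑ e, k e := by
  rw [linProd, natDegree_prod_of_monic _ _ fun e _ => (monic_X_sub_C (a e)).pow _]
  simp

lemma linProd_eval (a : ι → K) (k : ι → ℕ) (x : K) :
    (linProd a k).eval x = ∏ e, (x - a e) ^ k e := by
  simp [linProd, eval_prod]

lemma linProd_rootMultiplicity (a : ι → K) (k : ι → ℕ) (x : K) :
    (linProd a k).rootMultiplicity x = ∑ e, if x = a e then k e else 0 := by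
  classical
  rw [← count_roots, linProd, roots_prod _ _ (linProd_monic a k).ne_zero,
    Multiset.count_bind]
  rw [← Finset.sum_eq_multiset_sum]
  refine Finset.sum_congr rfl fun e _ => ?_
  rw [roots_pow, roots_X_sub_C, Multiset.count_nsmul, Multiset.count_singleton]
  split_ifs <;> simp

lemma val_linProd_eval (V : AddValuation K (WithTop ℚ)) (a : ι → K) (k : ι → ℕ) (x : K)
    (hx : ∀ e, x ≠ a e) :
    V ((linProd a k).eval x) = ((∑ e, (k e : ℚ) * w V (x - a e) : ℚ) : WithTop ℚ) := by
  classical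
  rw [linProd_eval]
  induction (Finset.univ : Finset ι) using Finset.induction_on with
  | empty => simp
  | insert e s he ih =>
    rw [Finset.prod_insert he, Finset.sum_insert he, V.map_mul, ih, V.map_pow,
      ← coe_w V (sub_ne_zero.2 (hx e)), WithTop.coe_add, ← WithTop.coe_nsmul, nsmul_eq_mul]

/-- The rational function `c ∏ₑ (X - aₑ) ^ kₑ` with integer exponents, positive and negative
exponents being collected in the numerator and the denominator. -/
noncomputable def ratFn (c : K) (a : ι → K) (k : ι → ℤ) : RatFunc K :=
  algebraMap K[X] (RatFunc K) (C c * linProd a fun e => (k e).toNat) /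
    algebraMap K[X] (RatFunc K) (linProd a fun e => (-k e).toNat)

lemma toNat_sub_toNat_neg_cast (k : ℤ) : (k.toNat : ℤ) - ((-k).toNat : ℤ) = k := by omega

section

variable (c : K) (a : ι → K) (k : ι → ℤ)

lemma ratFn_num_mul :
    (ratFn c a k).num * (linProd a fun e => (-k e).toNat) =
      (C c * linProd a fun e => (k e).toNat) * (ratFn c a k).denom :=
  (RatFunc.num_mul_eq_mul_denom_iff (linProd_monic _ _).ne_zero).2 rfl

lemma ratFn_ne_zero (hc : c ≠ 0) : ratFn c a k ≠ 0 := by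
  refine div_ne_zero ?_ ?_
  · exact RatFunc.algebraMap_ne_zero
      (mul_ne_zero (C_ne_zero.2 hc) (linProd_monic _ _).ne_zero)
  · exact RatFunc.algebraMap_ne_zero (linProd_monic _ _).ne_zero

lemma ordAt_some_ratFn (hc : c ≠ 0) (x : K) :
    ordAt (some x) (ratFn c a k) = ∑ e, if x = a e then k e else 0 := by
  have hn := RatFunc.num_ne_zero (ratFn_ne_zero c a k hc)
  have hd := RatFunc.denom_ne_zero (ratFn c a k)
  have hP : ∀ k : ι → ℕ, linProd a k ≠ 0 := fun k => (linProd_monic a k).ne_zero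
  have hC : (C c : K[X]) ≠ 0 := C_ne_zero.2 hc
  have h := congrArg (rootMultiplicity x) (ratFn_num_mul c a k)
  rw [rootMultiplicity_mul (mul_ne_zero hn (hP _)),
    rootMultiplicity_mul (mul_ne_zero (mul_ne_zero hC (hP _)) hd),
    rootMultiplicity_mul (mul_ne_zero hC (hP _)), rootMultiplicity_C, zero_add,
    linProd_rootMultiplicity, linProd_rootMultiplicity] at h
  have h' : ∑ e, (if x = a e then k e else 0) =
      ((∑ e, if x = a e then (k e).toNat else 0 : ℕ) : ℤ) -
        ((∑ e, if x = a e then (-k e).toNat else 0 : ℕ) : ℤ) := by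
    push_cast
    rw [← Finset.sum_sub_distrib]
    refine Finset.sum_congr rfl fun e _ => ?_
    split_ifs
    · omega
    · simp
  rw [h']
  simp only [ordAt]
  omega

lemma sum_toNat_sub : ((∑ e, (k e).toNat : ℕ) : ℤ) - ((∑ e, (-k e).toNat : ℕ) : ℤ) = ∑ e, k e := by
  push_cast
  rw [← Finset.sum_sub_distrib]
  refine Finset.sum_congr rfl fun e _ => ?_
  omega

lemma ordAt_none_ratFn (hc : c ≠ 0) : ordAt none (ratFn c a k) = -∑ e, k e := by
  have hC : (C c : K[X]) ≠ 0 := C_ne_zero.2 hc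
  have hP : ∀ k : ι → ℕ, linProd a k ≠ 0 := fun k => (linProd_monic a k).ne_zero
  simp only [ordAt]
  rw [ratFn, RatFunc.intDegree_div (RatFunc.algebraMap_ne_zero (mul_ne_zero hC (hP _)))
    (RatFunc.algebraMap_ne_zero (hP _)), RatFunc.intDegree_polynomial,
    RatFunc.intDegree_polynomial, natDegree_C_mul hc, linProd_natDegree, linProd_natDegree,
    sum_toNat_sub]

lemma evalAt_none_ratFn : evalAt none (ratFn c a k) = c := by
  have hd := RatFunc.denom_ne_zero (ratFn c a k)
  have h := congrArg leadingCoeff (ratFn_num_mul c a k)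
  rw [leadingCoeff_mul, leadingCoeff_mul, leadingCoeff_mul, leadingCoeff_C,
    (linProd_monic _ _).leadingCoeff, (linProd_monic _ _).leadingCoeff, mul_one, mul_one] at h
  simp only [evalAt]
  rw [h, mul_div_cancel_right₀ _ (leadingCoeff_ne_zero.2 hd)]

lemma val_evalAt_some_ratFn (V : AddValuation K (WithTop ℚ)) (hc : c ≠ 0) (x : K)
    (hx : ∀ e, x ≠ a e) :
    V (evalAt (some x) (ratFn c a k)) =
      ((w V c + ∑ e, (k e : ℚ) * w V (x - a e) : ℚ) : WithTop ℚ) := by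
  have hP : ∀ k : ι → ℕ, (linProd a k).eval x ≠ 0 := fun k => by
    rw [linProd_eval]
    exact Finset.prod_ne_zero_iff.2 fun e _ => pow_ne_zero _ (sub_ne_zero.2 (hx e))
  have h := congrArg (eval x) (ratFn_num_mul c a k)
  simp only [eval_mul, eval_C] at h
  -- the reduced denominator cannot vanish at `x`, as the numerator would vanish too
  have hd : (ratFn c a k).denom.eval x ≠ 0 := by
    intro h0
    rw [h0, mul_zero] at h
    have hn := (mul_eq_zero.1 h).resolve_right (hP _)
    obtain ⟨p, q, hpq⟩ := RatFunc.isCoprime_num_denom (ratFn c a k)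
    have := congrArg (eval x) hpq
    simp [h0, hn] at this
  have hev : evalAt (some x) (ratFn c a k) * (linProd a fun e => (-k e).toNat).eval x =
      c * (linProd a fun e => (k e).toNat).eval x := by
    simp only [evalAt, RatFunc.eval, eval₂_id]
    rw [div_mul_eq_mul_div, h, mul_div_cancel_right₀ _ hd]
  have hev0 : evalAt (some x) (ratFn c a k) ≠ 0 := by
    intro h0
    rw [h0, zero_mul] at hev
    exact mul_ne_zero hc (hP _) hev.symm
  have hV := congrArg V hev
  rw [V.map_mul, V.map_mul, val_linProd_eval V a _ x hx, val_linProd_eval V a _ x hx,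
    ← coe_w V hev0, ← coe_w V hc] at hV
  rw [← coe_w V hev0]
  norm_cast at hV ⊢
  rw [← eq_sub_iff_add_eq] at hV
  rw [hV, add_sub_assoc, ← Finset.sum_sub_distrib]
  congr 1
  refine Finset.sum_congr rfl fun e _ => ?_
  rw [← sub_mul]
  congr 1
  exact_mod_cast toNat_sub_toNat_neg_cast (k e)

end

end RationalFunctions

/-- Two primitive vectors with a common positive multiple coincide. -/
lemma primitive_eq_of_smul_eq {n : ℕ} {r ρ : Fin n → ℤ} (hr : IsPrimitiveVec r)
    (hρ : IsPrimitiveVec ρ) {m d : ℤ} (hm : 0 < m) (hd : 0 < d) (h : m • r = d • ρ) :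
    r = ρ := by
  have hi : ∀ i, m * r i = d * ρ i := fun i => congrFun h i
  -- `m / gcd m d` divides every coordinate of `ρ`, hence is a unit; likewise for `d`
  have key : ∀ {m d : ℤ} {r ρ : Fin n → ℤ}, 0 < m → IsPrimitiveVec ρ →
      (∀ i, m * r i = d * ρ i) → m ∣ d := by
    intro m d r ρ hm hρ hi
    obtain ⟨g, m', d', hg, hco, rfl, rfl⟩ := Int.exists_gcd_one' (m := m) (n := d)
      (Int.gcd_pos_of_ne_zero_left _ hm.ne')
    have hg' : (g : ℤ) ≠ 0 := by exact_mod_cast hg.ne'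
    have : IsUnit m' := hρ.2 m' fun i => by
      have h1 : m' * r i = d' * ρ i := by
        refine mul_right_cancel₀ hg' ?_
        linear_combination hi i
      exact (Int.isCoprime_iff_gcd_eq_one.2 hco).dvd_of_dvd_mul_left ⟨r i, h1.symm⟩
    exact mul_dvd_mul_right this.dvd _
  have hmd : m = d := Int.dvd_antisymm hm.le hd.le (key hm hρ hi) (key hd hr fun i => (hi i).symm)
  funext i
  exact mul_left_cancel₀ hm.ne' (by rw [hi i, hmd])

end TropLift

/-- Let `K` be an algebraically closed field with a surjective valuation
`v : K^* → ℚ`.  Let `(ι, Γ, m)` be a zero tension curve in `ℚ^n` of genus zero (a tree).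
Then there are a finite set `S ⊆ ℙ¹(K)` and nonzero rational functions
`φ₁, …, φ_n ∈ K(u)` whose zeros and poles all lie in `S`, such that:
(a) for every `s ∈ S` the order vector `σ_s = (ord_s φ₁, …, ord_s φ_n)` is nonzero;
(b) grouping the `σ_s = d_s ρ_s` by primitive direction recovers the degree of
`(ι, Γ, m)`: for every primitive `ρ`, the sum of the `σ_s` which are positive multiples
of `ρ` equals `(Σ_{rays e of Γ in direction ρ} m(e)) • ρ`;
(c) the set of valuation vectors `(v (φ₁ x), …, v (φ_n x))` for `x ∈ ℙ¹(K) ∖ S` is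
exactly the image `ι(Γ ∖ ∂Γ) ⊆ ℚ^n`. -/
theorem genus_zero_tropical_lifting
    {K : Type*} [Field K] [IsAlgClosed K] (v : K → WithTop ℚ)
    (hv0 : ∀ x : K, v x = ⊤ ↔ x = 0)
    (hvmul : ∀ x y : K, v (x * y) = v x + v y)
    (hvadd : ∀ x y : K, min (v x) (v y) ≤ v (x + y))
    (hsurj : ∀ q : ℚ, ∃ x : K, v x = (q : WithTop ℚ))
    {n : ℕ} (C : ZTC n) (hval : C.Valid) (htree : C.IsTree) :
    ∃ (S : Finset (Option K)) (φ : Fin n → RatFunc K),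
      (∀ i, φ i ≠ 0) ∧
      (∀ i, ∀ s : Option K, s ∉ S → ordAt s (φ i) = 0) ∧
      (∀ s ∈ S, (fun i => ordAt s (φ i)) ≠ (0 : Fin n → ℤ)) ∧
      (∀ ρ : Fin n → ℤ, IsPrimitiveVec ρ →
        (∑ s ∈ S.filter (fun s => ∃ d : ℤ, 0 < d ∧ (fun i => ordAt s (φ i)) = d • ρ),
            (fun i => ordAt s (φ i)))
          = (∑ e ∈ Finset.univ.filter (fun e : Fin C.ER => C.rdir e = ρ), (C.mR e : ℤ)) • ρ) ∧
      ((fun x : Option K => fun i => v (evalAt x (φ i))) '' {x : Option K | x ∉ S}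
        = (fun p : Fin n → ℚ => fun i => ((p i : ℚ) : WithTop ℚ)) '' C.ImageSet) := by
  have hv1 : v 1 = 0 := by
    have h := hvmul 1 1
    rw [mul_one] at h
    have hne : v 1 ≠ ⊤ := fun h1 => one_ne_zero ((hv0 1).1 h1)
    lift v 1 to ℚ using hne with q
    norm_cast at h ⊢
    linarith
  let V : AddValuation K (WithTop ℚ) := AddValuation.of v ((hv0 0).2 rfl) hv1 hvadd hvmul
  have hVv : ∀ x, V x = v x := fun x => rfl
  obtain ⟨a, c, ha, hsum, hc, himg⟩ := TropLift.exists_points V hsurj hval htree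
  choose c' hc' using fun i => hsurj (c i)
  have hc0 : ∀ i, c' i ≠ 0 := fun i h => by
    have := hc' i
    rw [(hv0 _).2 h] at this
    exact WithTop.top_ne_coe this
  have hwc : ∀ i, TropLift.w V (c' i) = c i := fun i => TropLift.w_eq V (hc' i)
  let φ : Fin n → RatFunc K := fun i =>
    TropLift.ratFn (c' i) a fun e => (C.mR e : ℤ) * C.rdir e i
  have hord : ∀ e, (fun i => ordAt (some (a e)) (φ i)) = (C.mR e : ℤ) • C.rdir e := by
    intro e
    funext i
    simp only [φ]
    rw [TropLift.ordAt_some_ratFn _ _ _ (hc0 i), Finset.sum_eq_single e]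
    · simp
    · intro b _ hb
      exact if_neg fun h => hb (ha h).symm
    · simp
  have hmpos : ∀ e, (0 : ℤ) < C.mR e := fun e => by exact_mod_cast hval.2.1 e
  have hinj : Function.Injective fun e => some (a e) := (Option.some_injective K).comp ha
  refine ⟨Finset.univ.image fun e => some (a e), φ, fun i => TropLift.ratFn_ne_zero _ _ _ (hc0 i),
    ?_, ?_, ?_, ?_⟩
  · rintro i (_ | x) hs
    · simp only [φ]
      rw [TropLift.ordAt_none_ratFn _ _ _ (hc0 i), neg_eq_zero]
      simpa using congrFun hsum i
    · simp only [φ]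
      rw [TropLift.ordAt_some_ratFn _ _ _ (hc0 i)]
      refine Finset.sum_eq_zero fun e _ => if_neg fun h => hs ?_
      exact Finset.mem_image.2 ⟨e, Finset.mem_univ _, by rw [h]⟩
  · intro s hs
    obtain ⟨e, -, rfl⟩ := Finset.mem_image.1 hs
    rw [hord e]
    exact smul_ne_zero (hmpos e).ne' (hval.2.2.1 e).1
  · intro ρ hρ
    rw [Finset.filter_image, Finset.sum_image fun x _ y _ h => hinj h, Finset.sum_smul]
    refine Finset.sum_congr ?_ fun e he => ?_
    · ext e
      simp only [Finset.mem_filter, Finset.mem_univ, true_and, hord]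
      constructor
      · rintro ⟨d, hd, h⟩
        exact TropLift.primitive_eq_of_smul_eq (hval.2.2.1 e) hρ (hmpos e) hd h
      · rintro rfl
        exact ⟨_, hmpos e, rfl⟩
    · rw [hord, (Finset.mem_filter.1 he).2]
  · have hfin : ∀ x : K, (∀ e, x ≠ a e) →
        (fun i => v (evalAt (some x) (φ i))) = fun i => ((c i + ∑ e,
          (((C.mR e : ℤ) * C.rdir e i : ℤ) : ℚ) * TropLift.w V (x - a e) : ℚ) : WithTop ℚ) := by
      intro x hx
      funext i
      rw [← hwc i]
      exact TropLift.val_evalAt_some_ratFn _ _ _ V (hc0 i) x hx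
    ext q
    simp only [Set.mem_image, Set.mem_ofPred_eq]
    constructor
    · rintro ⟨_ | x, hs, rfl⟩
      · refine ⟨c, hc, ?_⟩
        funext i
        simp only [φ]
        rw [TropLift.evalAt_none_ratFn, hc']
      · have hx : ∀ e, x ≠ a e := fun e h =>
          hs (Finset.mem_image.2 ⟨e, Finset.mem_univ _, by rw [h]⟩)
        exact ⟨_, (himg _).2 ⟨x, hx, rfl⟩, (hfin x hx).symm⟩
    · rintro ⟨p, hp, rfl⟩
      obtain ⟨x, hx, rfl⟩ := (himg p).1 hp
      refine ⟨some x, fun h => ?_, hfin x hx⟩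
      obtain ⟨e, -, he⟩ := Finset.mem_image.1 h
      exact hx e (Option.some_injective K he).symm
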